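/- Let E : y² = x³ + ax + b be an elliptic curve over ℚ (a, b ∈ ℚ with 4a³ + 27b² ≠ 0). There exists a constant c(E), depending only on E, such that for every squarefree nonzero integer D the quadratic twist E^(D) : y² = x³ + aD²x + bD³ satisfies rank E^(D)(ℚ) ≤ 12·ω(D) + c(E). -/

import Mathlib

open scoped TensorProduct

/-- The rank of an abelian group `G`, i.e. `dim_ℚ (G ⊗_ℤ ℚ)`. -/
noncomputable def grpRank (G : Type*) [AddCommGroup G] : ℕ :=
  Module.finrank ℚ (ℚ ⊗[ℤ] G)

/-- The quadratic twist by `D` of the elliptic curve `y² = x³ + ax + b`,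
namely `y² = x³ + aD²x + bD³`. -/
def quadTwist (a b : ℚ) (D : ℤ) : WeierstrassCurve ℚ :=
  ⟨0, 0, 0, a * (D : ℚ) ^ 2, b * (D : ℚ) ^ 3⟩

namespace TwistRank
open WeierstrassCurve WeierstrassCurve.Affine Height

section Curve
variable {K : Type*} [Field K] [DecidableEq K]

/-- Addition-and-subtraction map on a short Weierstrass curve. -/
lemma addSub_short (h2 : (2 : K) ≠ 0) (W : WeierstrassCurve K) [W.IsElliptic]
    (h₁ : W.a₁ = 0) (h₂ : W.a₂ = 0) (h₃ : W.a₃ = 0) (P Q : W.toAffine.Point) :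
    ∃ c : K, c ≠ 0 ∧ (fun i ↦ (addSubMap W i).eval (P.sym2x Q)) =
      c • (P + Q).sym2x (P - Q) := by
  have hb2 : W.b₂ = 0 := by simp [WeierstrassCurve.b₂, h₁, h₂]
  have hb4 : W.b₄ = 2 * W.a₄ := by simp [WeierstrassCurve.b₄, h₁]
  have hb6 : W.b₆ = 4 * W.a₆ := by simp [WeierstrassCurve.b₆, h₃]
  have hb8 : W.b₈ = - W.a₄ ^ 2 := by simp [WeierstrassCurve.b₈, h₁, h₂, h₃]
  have key : ∀ s t u : K, (fun i ↦ (addSubMap W i).eval ![s, t, u]) =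
      ![s ^ 2 - 2 * W.a₄ * s * u - 4 * W.a₆ * t * u + W.a₄ ^ 2 * u ^ 2,
        2 * t * s + 2 * W.a₄ * t * u + 4 * W.a₆ * u ^ 2, t ^ 2 - 4 * s * u] := by
    intro s t u
    funext i
    fin_cases i <;> simp [addSubMap, hb2, hb4, hb6, hb8]
  rcases P with _ | ⟨x, y, hP⟩
  · rcases Q with _ | ⟨x', y', hQ⟩
    · refine ⟨1, one_ne_zero, ?_⟩
      simp only [← Point.zero_def, add_zero, sub_zero, Point.sym2x_zero_zero, key]
      simp
    · refine ⟨1, one_ne_zero, ?_⟩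
      simp only [← Point.zero_def, zero_add, zero_sub, Point.sym2x_neg_right, Point.sym2x_zero_some,
        Point.sym2x_some_some, key]
      simp
      exact ⟨by ring, by ring⟩
  · rcases Q with _ | ⟨x', y', hQ⟩
    · refine ⟨1, one_ne_zero, ?_⟩
      simp only [← Point.zero_def, add_zero, sub_zero, Point.sym2x_some_zero,
        Point.sym2x_some_some, key]
      simp
      exact ⟨by ring, by ring⟩
    have eP := (W.toAffine.equation_iff x y).mp hP.1
    have eQ := (W.toAffine.equation_iff x' y').mp hQ.1
    simp only [h₁, h₂, h₃] at eP eQ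
    have dbl : ∃ c : K, c ≠ 0 ∧ (fun i ↦ (addSubMap W i).eval ((Point.some x y hP).sym2x (.some x y hP))) =
        c • (Point.some x y hP + Point.some x y hP).sym2x 0 := by
      by_cases hy : y = 0
      · have : Point.some x y hP + Point.some x y hP = 0 := by
          apply Point.add_self_of_Y_eq
          simp [negY, hy, h₁, h₃]
        rw [this]
        have hne := addSubMap_ne_zero W (Point.sym2x_ne_zero (.some x y hP) (.some x y hP))
        simp only [Point.sym2x_some_some, Point.sym2x_zero_zero, key] at hne ⊢
        have z1 : 2 * (x + x) * (x * x) + 2 * W.a₄ * (x + x) * 1 + 4 * W.a₆ * 1 ^ 2 = 0 := by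
          subst hy; linear_combination -4 * eP
        have z2 : (x + x) ^ 2 - 4 * (x * x) * 1 = 0 := by ring
        rw [z1, z2] at hne ⊢
        generalize (x * x) ^ 2 - 2 * W.a₄ * (x * x) * 1 - 4 * W.a₆ * (x + x) * 1 +
          W.a₄ ^ 2 * 1 ^ 2 = c at hne ⊢
        refine ⟨c, ?_, ?_⟩
        · rintro rfl
          apply hne
          simp
        · simp
      · have hy' : y ≠ W.toAffine.negY x y := by
          simp only [negY, h₁, h₃]
          intro h
          apply hy
          have : 2 * y = 0 := by linear_combination h
          simpa [h2] using this
        refine ⟨4 * y ^ 2, ?_, ?_⟩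
        · have : (4 : K) = 2 ^ 2 := by norm_num
          rw [this]; positivity
        rw [Point.add_self_of_Y_ne hy']
        simp only [Point.sym2x_some_some, Point.sym2x_some_zero, key, addX, slope_of_Y_ne rfl hy',
          negY, h₁, h₂, h₃]
        have h2y : y - (-y - 0 * x - 0) = 2 * y := by ring
        rw [h2y]
        simp only [Matrix.smul_cons, smul_eq_mul, mul_one, mul_zero, Matrix.smul_empty]
        congr 1
        · field_simp
          linear_combination (32 * x) * eP
        · congr 1
          · linear_combination -4 * eP
          · congr 1
            ring
    by_cases hx : x = x'
    · rcases (Point.X_eq_iff (h₁ := hP) (h₂ := hQ)).mp hx with h | h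
      · rw [← h]; simpa using dbl
      · have h' : Point.some x' y' hQ = - Point.some x y hP := by rw [h, neg_neg]
        rw [h', Point.sym2x_neg_right]
        rw [Point.sym2x_comm (_ + _), add_neg_cancel, sub_neg_eq_add]
        exact dbl
    · have hx' : x - x' ≠ 0 := sub_ne_zero.mpr hx
      refine ⟨(x - x') ^ 2, pow_ne_zero _ hx', ?_⟩
      rw [sub_eq_add_neg (Point.some x y hP), Point.neg_some, Point.add_of_X_ne hx, Point.add_of_X_ne hx]
      simp only [Point.sym2x_some_some, key, addX, slope_of_X_ne hx,
          negY, h₁, h₂, h₃]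
      simp only [Matrix.smul_cons, smul_eq_mul, mul_one, mul_zero, Matrix.smul_empty]
      congr 1
      · field_simp
        grind
      · congr 1
        · field_simp
          grind
        · congr 1
          ring

end Curve

section Height
variable {K : Type*} [Field K] [NumberField K] [DecidableEq K]

lemma fg_of_index (W : WeierstrassCurve K) [W.IsElliptic]
    (h₁ : W.a₁ = 0) (h₂ : W.a₂ = 0) (h₃ : W.a₃ = 0)
    (hfin : (nsmulAddMonoidHom (α := W.toAffine.Point) 2).range.FiniteIndex) :
    AddGroup.FG W.toAffine.Point := by
  obtain ⟨C₁, hC₁⟩ := abs_logHeight_addSubMap_sub_two_mul_logHeight_le W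
  obtain ⟨C₂, hC₂⟩ := abs_logHeight_sym2_sub_le K
  have hs (P Q : W.toAffine.Point) :
      |logHeight (P.sym2x Q) - (logHeight P.xRep + logHeight Q.xRep)| ≤ C₂ := by
    have e (R : W.toAffine.Point) : ![R.xRep 0, R.xRep 1] = R.xRep := by
      funext i; fin_cases i <;> rfl
    have := @hC₂ (P.xRep 0) (P.xRep 1) (Q.xRep 0) (Q.xRep 1)
      (by rw [e]; exact P.xRep_ne_zero) (by rw [e]; exact Q.xRep_ne_zero)
    rwa [e, e] at this
  have : Northcott (fun P : W.toAffine.Point ↦ logHeight P.xRep) := by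
    constructor
    intro B
    have hB : {x : K | logHeight₁ x ≤ B}.Finite := Northcott.finite_le (h := logHeight₁) B
    have hB' : (insert ![1, 0] ((fun x : K ↦ ![x, 1]) '' {x : K | logHeight₁ x ≤ B})).Finite :=
      (hB.image _).insert _
    refine Set.Finite.of_finite_fibers (Point.xRep) (hB'.subset ?_) ?_
    · rintro _ ⟨P, hP, rfl⟩
      rcases P with _ | ⟨x, y, h⟩
      · left; rfl
      · right
        refine ⟨x, ?_, rfl⟩
        rw [Set.mem_ofPred_eq, Point.xRep_some, ← logHeight₁_eq_logHeight] at hP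
        exact hP
    · rintro _ ⟨P, hP, rfl⟩
      refine (Set.toFinite {P, -P}).subset ?_
      rintro Q ⟨_, hQ⟩
      exact Point.eq_or_eq_neg_of_xRep_eq_xRep hQ
  refine AddCommGroup.fg_of_descent' (h := fun P ↦ logHeight P.xRep) (C := C₁ + 3 * C₂) hfin
    (fun P ↦ logHeight_nonneg _) (fun P Q ↦ ?_)
  obtain ⟨c, hc, hcc⟩ := addSub_short two_ne_zero W h₁ h₂ h₃ P Q
  have a := hC₁ (P.sym2x Q)
  rw [hcc, logHeight_smul_eq_logHeight _ hc] at a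
  have b := hs P Q
  have d := hs (P + Q) (P - Q)
  rw [abs_le] at *
  constructor <;> linarith [a.1, a.2, b.1, b.2, d.1, d.2]

end Height
end TwistRank

namespace TwistRank
open WeierstrassCurve WeierstrassCurve.Affine Height

/-- A short Weierstrass curve with full rational 2-torsion. -/
structure IsSplit {K : Type*} [Field K] (W : WeierstrassCurve K) (e₁ e₂ e₃ : K) : Prop where
  a₁ : W.a₁ = 0
  a₂ : W.a₂ = 0
  a₃ : W.a₃ = 0
  a₄ : W.a₄ = e₁ * e₂ + e₁ * e₃ + e₂ * e₃
  a₆ : W.a₆ = - (e₁ * e₂ * e₃)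
  sum : e₁ + e₂ + e₃ = 0
  ne₁₂ : e₁ ≠ e₂
  ne₁₃ : e₁ ≠ e₃
  ne₂₃ : e₂ ≠ e₃

section Split
variable {K : Type*} [Field K] {W : WeierstrassCurve K} {e₁ e₂ e₃ : K}

lemma IsSplit.Δ_ne (h : IsSplit W e₁ e₂ e₃) (h2 : (2 : K) ≠ 0) : W.Δ ≠ 0 := by
  have : W.Δ = (4 * ((e₁ - e₂) * (e₁ - e₃) * (e₂ - e₃))) ^ 2 := by
    have h3 : e₃ = - e₁ - e₂ := by linear_combination h.sum
    simp only [WeierstrassCurve.Δ, WeierstrassCurve.b₂, WeierstrassCurve.b₄, WeierstrassCurve.b₆,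
      WeierstrassCurve.b₈, h.a₁, h.a₂, h.a₃, h.a₄, h.a₆, h3]
    ring
  rw [this]
  have h4 : (4 : K) ≠ 0 := by
    have : (4 : K) = 2 * 2 := by norm_num
    rw [this]; exact mul_ne_zero h2 h2
  have := sub_ne_zero.mpr h.ne₁₂
  have := sub_ne_zero.mpr h.ne₁₃
  have := sub_ne_zero.mpr h.ne₂₃
  positivity

lemma IsSplit.isElliptic (h : IsSplit W e₁ e₂ e₃) (h2 : (2 : K) ≠ 0) : W.IsElliptic :=
  ⟨isUnit_iff_ne_zero.mpr (h.Δ_ne h2)⟩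

lemma IsSplit.equation (h : IsSplit W e₁ e₂ e₃) {x y : K} :
    W.toAffine.Equation x y ↔ y ^ 2 = (x - e₁) * (x - e₂) * (x - e₃) := by
  rw [equation_iff, h.a₁, h.a₂, h.a₃, h.a₄, h.a₆]
  constructor
  · intro H; linear_combination H + x ^ 2 * h.sum
  · intro H; linear_combination H - x ^ 2 * h.sum

variable [DecidableEq K]

lemma IsSplit.halve (h : IsSplit W e₁ e₂ e₃) (h2 : (2 : K) ≠ 0) {x y z₁ z₂ z₃ : K}
    (hP : W.toAffine.Nonsingular x y)
    (hz₁ : x - e₁ = z₁ ^ 2) (hz₂ : x - e₂ = z₂ ^ 2) (hz₃ : x - e₃ = z₃ ^ 2) :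
    Point.some x y hP ∈ (nsmulAddMonoidHom (α := W.toAffine.Point) 2).range := by
  have n12 : z₁ + z₂ ≠ 0 := by
    intro H; apply h.ne₁₂; linear_combination hz₂ - hz₁ - (z₁ - z₂) * H
  have n13 : z₁ + z₃ ≠ 0 := by
    intro H; apply h.ne₁₃; linear_combination hz₃ - hz₁ - (z₁ - z₃) * H
  have n23 : z₂ + z₃ ≠ 0 := by
    intro H; apply h.ne₂₃; linear_combination hz₃ - hz₂ - (z₂ - z₃) * H
  set X := x + z₁ * z₂ + z₁ * z₃ + z₂ * z₃ with hX
  set Y := (z₁ + z₂) * (z₁ + z₃) * (z₂ + z₃) with hY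
  have hY0 : Y ≠ 0 := by positivity
  have f1 : X - e₁ = (z₁ + z₂) * (z₁ + z₃) := by linear_combination hX + hz₁
  have f2 : X - e₂ = (z₁ + z₂) * (z₂ + z₃) := by linear_combination hX + hz₂
  have f3 : X - e₃ = (z₁ + z₃) * (z₂ + z₃) := by linear_combination hX + hz₃
  have hQe : W.toAffine.Equation X Y := by
    rw [h.equation, f1, f2, f3, hY]; ring
  have hQ : W.toAffine.Nonsingular X Y :=
    (W.toAffine.equation_iff_nonsingular_of_Δ_ne_zero (h.Δ_ne h2)).mp hQe
  have hy' : Y ≠ W.toAffine.negY X Y := by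
    simp only [negY, h.a₁, h.a₃]
    intro H
    have : 2 * Y = 0 := by linear_combination H
    simp [h2, hY0] at this
  have hsl : W.toAffine.slope X X Y Y = z₁ + z₂ + z₃ := by
    rw [slope_of_Y_ne rfl hy']
    simp only [negY, h.a₁, h.a₂, h.a₃, h.a₄]
    have h2y : Y - (-Y - 0 * X - 0) = 2 * Y := by ring
    rw [h2y, div_eq_iff (by positivity)]
    have : 3 * X ^ 2 + 2 * 0 * X + (e₁ * e₂ + e₁ * e₃ + e₂ * e₃) - 0 * Y =
      (X - e₁) * (X - e₂) + (X - e₁) * (X - e₃) + (X - e₂) * (X - e₃) := by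
      linear_combination 2 * X * h.sum
    rw [this, f1, f2, f3, hY]; ring
  have hdx : W.toAffine.addX X X (W.toAffine.slope X X Y Y) = x := by
    rw [hsl, addX, h.a₁, h.a₂]
    linear_combination -2 * hX - hz₁ - hz₂ - hz₃ - h.sum
  have hadd := Point.add_self_of_Y_ne (h₁ := hQ) hy'
  rcases (Point.X_eq_iff (h₁ := hP) (h₂ := nonsingular_add hQ hQ fun hxy => hy' hxy.right)).mp
    hdx.symm with H | H
  · refine ⟨Point.some X Y hQ, ?_⟩
    rw [H, ← hadd]; simp [two_nsmul]
  · refine ⟨- Point.some X Y hQ, ?_⟩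
    rw [H, ← hadd]; simp only [nsmulAddMonoidHom_apply, two_nsmul, neg_add]

lemma IsSplit.fiber (h : IsSplit W e₁ e₂ e₃) (h2 : (2 : K) ≠ 0) {x y x' y' : K}
    (hP : W.toAffine.Nonsingular x y) (hQ : W.toAffine.Nonsingular x' y')
    (hy : y ≠ 0) (hy' : y' ≠ 0)
    (s₁ : IsSquare ((x - e₁) * (x' - e₁))) (s₂ : IsSquare ((x - e₂) * (x' - e₂))) :
    Point.some x y hP - Point.some x' y' hQ ∈
      (nsmulAddMonoidHom (α := W.toAffine.Point) 2).range := by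
  suffices H : Point.some x y hP + Point.some x' y' hQ ∈
      (nsmulAddMonoidHom (α := W.toAffine.Point) 2).range by
    have h3 : (2 : ℕ) • Point.some x' y' hQ ∈ (nsmulAddMonoidHom (α := W.toAffine.Point) 2).range :=
      ⟨_, rfl⟩
    have := sub_mem H h3
    rw [two_nsmul] at this
    convert this using 1
    abel
  have eP := h.equation.mp hP.1
  have eQ := h.equation.mp hQ.1
  by_cases hx : x = x'
  · rcases (Point.X_eq_iff (h₁ := hP) (h₂ := hQ)).mp hx with H | H
    · rw [H]; exact ⟨_, two_nsmul _⟩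
    · rw [H, neg_add_cancel]; exact zero_mem _
  have hx0 : x - x' ≠ 0 := sub_ne_zero.mpr hx
  have p0 : (x - e₁) * (x - e₂) * (x - e₃) ≠ 0 := by rw [← eP]; positivity
  have q0 : (x' - e₁) * (x' - e₂) * (x' - e₃) ≠ 0 := by rw [← eQ]; positivity
  simp only [ne_eq, mul_eq_zero, not_or] at p0 q0
  obtain ⟨⟨p1, p2⟩, p3⟩ := p0
  obtain ⟨⟨q1, q2⟩, q3⟩ := q0
  have s₃ : IsSquare ((x - e₃) * (x' - e₃)) := by
    obtain ⟨u, hu⟩ := s₁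
    obtain ⟨v, hv⟩ := s₂
    have huv : u * v ≠ 0 := by
      intro H
      have : (u * u) * (v * v) = 0 := by linear_combination (u * v) * H
      rw [← hu, ← hv] at this
      simp [p1, p2, q1, q2] at this
    refine ⟨y * y' / (u * v), ?_⟩
    rw [div_mul_div_comm, eq_div_iff (mul_ne_zero huv huv)]
    have : (x - e₃) * (x' - e₃) * (u * u * (v * v)) = y ^ 2 * y' ^ 2 := by
      rw [← hu, ← hv, eP, eQ]; ring
    linear_combination this
  set l := W.toAffine.slope x x' y y' with hl
  have hl' : l * (x - x') = y - y' := by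
    rw [hl, slope_of_X_ne hx]; field_simp
  rw [Point.add_of_X_ne hx]
  set X := W.toAffine.addX x x' l with hX
  have hX' : X = l ^ 2 - x - x' := by rw [hX, addX, h.a₁, h.a₂]; ring
  have main : ∀ e : K, (e - e₁) * (e - e₂) * (e - e₃) = 0 →
      (x - e) * (x' - e) * (X - e) = (l * (e - x) + y) ^ 2 := by
    intro e he
    have h3 : e₃ = - e₁ - e₂ := by linear_combination h.sum
    have hy2 : y' = y - l * (x - x') := by linear_combination hl'
    rw [hy2, h3] at eQ
    rw [h3] at eP he
    rw [hX']
    apply mul_right_cancel₀ hx0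
    linear_combination -(e - x') * eP + (e - x) * eQ - (x - x') * he
  have sq : ∀ e : K, x - e ≠ 0 → x' - e ≠ 0 → (e - e₁) * (e - e₂) * (e - e₃) = 0 →
      IsSquare ((x - e) * (x' - e)) → ∃ z, X - e = z ^ 2 := by
    rintro e n n' he ⟨w, hw⟩
    have m := main e he
    rw [hw] at m
    have hw0 : w ≠ 0 := by
      rintro rfl
      simp [n, n'] at hw
    refine ⟨(l * (e - x) + y) / w, ?_⟩
    rw [div_pow, eq_div_iff (by positivity)]
    linear_combination m
  obtain ⟨z₁, hz₁⟩ := sq e₁ p1 q1 (by ring) s₁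
  obtain ⟨z₂, hz₂⟩ := sq e₂ p2 q2 (by ring) s₂
  obtain ⟨z₃, hz₃⟩ := sq e₃ p3 q3 (by ring) s₃
  exact h.halve h2 _ hz₁ hz₂ hz₃

end Split
end TwistRank

namespace TwistRank
open IsDedekindDomain NumberField WithZero
open scoped nonZeroDivisors

lemma isSquare_exp_iff (n : ℤ) : IsSquare (exp n : ℤᵐ⁰) ↔ Even n := by
  constructor
  · rintro ⟨z, hz⟩
    have hz0 : z ≠ 0 := by
      rintro rfl
      simp at hz
    refine ⟨log z, ?_⟩
    have := congrArg log hz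
    rwa [log_exp, log_mul hz0 hz0] at this
  · rintro ⟨m, rfl⟩
    exact ⟨exp m, by rw [exp_add]⟩

lemma exists_exp {z : ℤᵐ⁰} (hz : z ≠ 0) : ∃ n : ℤ, z = exp n := ⟨log z, (exp_log hz).symm⟩

lemma isSquare_mul_of_iff {z w : ℤᵐ⁰} (hz : z ≠ 0) (hw : w ≠ 0) (h : IsSquare z ↔ IsSquare w) :
    IsSquare (z * w) := by
  obtain ⟨n, rfl⟩ := exists_exp hz
  obtain ⟨m, rfl⟩ := exists_exp hw
  rw [← exp_add, isSquare_exp_iff, Int.even_add]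
  simpa only [isSquare_exp_iff] using h

section
variable {R : Type*} [CommRing R] [IsDedekindDomain R]

lemma ideal_sq {r : R} (hr : r ≠ 0) (h : ∀ v : HeightOneSpectrum R, IsSquare (v.intValuation r)) :
    ∃ J : Ideal R, Ideal.span {r} = J ^ 2 := by
  have hI : Ideal.span {r} ≠ 0 := by simpa using hr
  have hev : ∀ v : HeightOneSpectrum R, Even
      ((Associates.mk v.asIdeal).count (Associates.mk (Ideal.span {r})).factors) := by
    intro v
    have := h v
    rw [v.intValuation_if_neg hr, isSquare_exp_iff] at this
    simpa using this
  choose m hm using hev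
  refine ⟨∏ᶠ v : HeightOneSpectrum R, v.asIdeal ^ m v, ?_⟩
  rw [finprod_pow]
  · conv_lhs => rw [← Ideal.finprod_heightOneSpectrum_factorization hI]
    refine finprod_congr fun v => ?_
    rw [HeightOneSpectrum.maxPowDividing, hm v, ← pow_mul, mul_two]
  · refine (Associates.finite_factors hI).subset ?_
    intro v hv h0
    apply hv
    have : m v = 0 := by
      have := hm v
      have h0' : (Associates.mk v.asIdeal).count (Associates.mk (Ideal.span {r})).factors = 0 := by
        exact_mod_cast h0
      omega
    simp [this]
end

lemma exists_integral_rep {K : Type*} [Field K] [NumberField K] {x : K} (hx : x ≠ 0)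
    (h : ∀ v : HeightOneSpectrum (𝓞 K), IsSquare (v.valuation K x)) :
    ∃ (r : 𝓞 K) (J : Ideal (𝓞 K)), r ≠ 0 ∧ Ideal.span {r} = J ^ 2 ∧ 
      IsSquare (x * algebraMap (𝓞 K) K r) := by
  obtain ⟨a, s, hs, rfl⟩ := IsFractionRing.div_surjective (A := 𝓞 K) x
  have hs0 : s ≠ 0 := nonZeroDivisors.ne_zero hs
  have hs1 : algebraMap (𝓞 K) K s ≠ 0 := by simpa using hs0
  have ha0 : a ≠ 0 := by
    rintro rfl
    simp at hx
  have hr : a * s ≠ 0 := mul_ne_zero ha0 hs0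
  have e : algebraMap (𝓞 K) K (a * s) = algebraMap (𝓞 K) K a / algebraMap (𝓞 K) K s *
      (algebraMap (𝓞 K) K s) ^ 2 := by
    rw [map_mul]; field_simp
  obtain ⟨J, hJ⟩ := ideal_sq hr (fun v => by
    rw [← v.valuation_of_algebraMap (K := K)]
    change IsSquare (v.valuation K (algebraMap (𝓞 K) K (a * s)))
    rw [e, map_mul, map_pow]
    exact (h v).mul (IsSquare.sq _))
  refine ⟨a * s, J, hr, hJ, algebraMap (𝓞 K) K a, ?_⟩
  rw [e]; field_simp

instance finite_units_sq {K : Type*} [Field K] [NumberField K] :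
    Finite ((𝓞 K)ˣ ⧸ (powMonoidHom 2 : (𝓞 K)ˣ →* (𝓞 K)ˣ).range) := by
  have : Group.FG (𝓞 K)ˣ := Group.fg_iff_monoid_fg.mpr inferInstance
  apply CommGroup.finite_of_fg_isMulTorsion
  intro q
  obtain ⟨u, rfl⟩ := QuotientGroup.mk_surjective q
  rw [isOfFinOrder_iff_pow_eq_one]
  refine ⟨2, by norm_num, ?_⟩
  rw [← QuotientGroup.mk_pow, QuotientGroup.eq_one_iff]
  exact ⟨u, rfl⟩

/-- Everywhere-even elements are finite modulo squares. -/
lemma exists_even_map (K : Type*) [Field K] [NumberField K] :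
    ∃ (n : ℕ) (f : K → Fin n), ∀ x y : K, x ≠ 0 → y ≠ 0 →
      (∀ v : HeightOneSpectrum (𝓞 K), IsSquare (v.valuation K x)) →
      (∀ v : HeightOneSpectrum (𝓞 K), IsSquare (v.valuation K y)) →
      f x = f y → IsSquare (x * y) := by
  classical
  let Q := (𝓞 K)ˣ ⧸ (powMonoidHom 2 : (𝓞 K)ˣ →* (𝓞 K)ˣ).range
  let A : Type _ := {x : K // x ≠ 0 ∧ ∀ v : HeightOneSpectrum (𝓞 K), IsSquare (v.valuation K x)}
  have hrep : ∀ x : A, ∃ (r : 𝓞 K) (J : (Ideal (𝓞 K))⁰), r ≠ 0 ∧ Ideal.span {r} = (J : Ideal (𝓞 K)) ^ 2 ∧ 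
      IsSquare (x.1 * algebraMap (𝓞 K) K r) := by
    rintro ⟨x, hx, h⟩
    obtain ⟨r, J, hr, hJ, hsq⟩ := exists_integral_rep hx h
    refine ⟨r, ⟨J, ?_⟩, hr, hJ, hsq⟩
    rw [mem_nonZeroDivisors_iff_ne_zero]
    rintro rfl
    apply hr
    simpa using hJ
  choose r J hr hJ hsq using hrep
  let c : A → ClassGroup (𝓞 K) := fun x => ClassGroup.mk0 (J x)
  have key : ∀ x y : A, c x = c y → ∃ u : (𝓞 K)ˣ, IsSquare (x.1 * y.1 * algebraMap (𝓞 K) K u) := by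
    intro x y h
    obtain ⟨s, t, hs, ht, hst⟩ := ClassGroup.mk0_eq_mk0_iff.mp h
    have h2 : Ideal.span {s ^ 2 * r x} = Ideal.span {t ^ 2 * r y} := by
      rw [← Ideal.span_singleton_mul_span_singleton, ← Ideal.span_singleton_mul_span_singleton,
        hJ, hJ, ← Ideal.span_singleton_pow, ← Ideal.span_singleton_pow, ← mul_pow, hst, mul_pow]
    obtain ⟨u, hu⟩ := Ideal.span_singleton_eq_span_singleton.mp h2
    refine ⟨u, ?_⟩
    obtain ⟨p, hp⟩ := hsq x
    obtain ⟨q, hq⟩ := hsq y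
    have hu' := congrArg (algebraMap (𝓞 K) K) hu
    simp only [map_mul, map_pow] at hu'
    have rx : algebraMap (𝓞 K) K (r x) ≠ 0 := by simpa using hr x
    have ry : algebraMap (𝓞 K) K (r y) ≠ 0 := by simpa using hr y
    have s0 : algebraMap (𝓞 K) K s ≠ 0 := by simpa using hs
    have t0 : algebraMap (𝓞 K) K t ≠ 0 := by simpa using ht
    refine ⟨p * q * algebraMap (𝓞 K) K t / (algebraMap (𝓞 K) K s * algebraMap (𝓞 K) K (r x)), ?_⟩
    rw [div_mul_div_comm, eq_div_iff (by positivity)]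
    linear_combination x.1 * y.1 * algebraMap (𝓞 K) K (r x) * hu' + (algebraMap (𝓞 K) K t) ^ 2 * (y.1 * algebraMap (𝓞 K) K (r y) * hp + p * p * hq)
  let rep : ClassGroup (𝓞 K) → K := fun k => if hk : ∃ y : A, c y = k then hk.choose.1 else 1
  have hu : ∀ x : A, ∃ u : (𝓞 K)ˣ, IsSquare (x.1 * rep (c x) * algebraMap (𝓞 K) K u) := by
    intro x
    have hk : ∃ y : A, c y = c x := ⟨x, rfl⟩
    simp only [rep, dif_pos hk]
    exact key x _ hk.choose_spec.symm
  have hrep0 : ∀ x : A, rep (c x) ≠ 0 := by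
    intro x
    have hk : ∃ y : A, c y = c x := ⟨x, rfl⟩
    simp only [rep, dif_pos hk]
    exact hk.choose.2.1
  choose u hu using hu
  let g : A → ClassGroup (𝓞 K) × Q := fun x => (c x, (QuotientGroup.mk (u x) : Q))
  let e := Finite.equivFin (ClassGroup (𝓞 K) × Q)
  refine ⟨Nat.card (ClassGroup (𝓞 K) × Q), fun x => if hx : _ then e (g ⟨x, hx⟩) else e 1, ?_⟩
  intro x y hx hy vx vy hxy
  beta_reduce at hxy
  rw [dif_pos ⟨hx, vx⟩, dif_pos ⟨hy, vy⟩, EmbeddingLike.apply_eq_iff_eq] at hxy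
  set X : A := ⟨x, hx, vx⟩ with hX
  set Y : A := ⟨y, hy, vy⟩ with hY
  obtain ⟨h1, h2⟩ := Prod.ext_iff.mp hxy
  obtain ⟨w, hw⟩ := QuotientGroup.eq.mp h2
  have h1' : c X = c Y := h1
  obtain ⟨p, hp⟩ := hu X
  obtain ⟨q, hq⟩ := hu Y
  rw [← h1'] at hq
  have r0 := hrep0 X
  have hw' : (u Y : (𝓞 K)) = u X * w ^ 2 := by
    have : u Y = u X * w ^ 2 := by
      rw [← powMonoidHom_apply, hw]; simp
    rw [this]; simp
  rw [hw', map_mul, map_pow] at hq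
  have uX0 : algebraMap (𝓞 K) K (u X) ≠ 0 := by simp
  have w0 : algebraMap (𝓞 K) K w ≠ 0 := by simp
  refine ⟨p * q / (rep (c X) * algebraMap (𝓞 K) K (u X) * algebraMap (𝓞 K) K w), ?_⟩
  rw [div_mul_div_comm, eq_div_iff (by positivity)]
  have : p * q * (p * q) = (p * p) * (q * q) := by ring
  rw [this, ← hp, ← hq]
  ring

/-- Elements even outside `S`. -/
lemma exists_even_map' (K : Type*) [Field K] [NumberField K] :
    ∃ n : ℕ, ∀ S : Finset (HeightOneSpectrum (𝓞 K)), 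
      ∃ f : K → Fin (2 ^ S.card * n), ∀ x y : K, x ≠ 0 → y ≠ 0 →
      (∀ v : HeightOneSpectrum (𝓞 K), v ∉ S → IsSquare (v.valuation K x)) →
      (∀ v : HeightOneSpectrum (𝓞 K), v ∉ S → IsSquare (v.valuation K y)) →
      f x = f y → IsSquare (x * y) := by
  classical
  obtain ⟨n, f, hf⟩ := exists_even_map K
  refine ⟨n, fun S => ?_⟩
  let A : Type _ := {x : K // x ≠ 0 ∧
    ∀ v : HeightOneSpectrum (𝓞 K), v ∉ S → IsSquare (v.valuation K x)}
  let c : K → (S → Bool) := fun x v => decide (IsSquare (v.1.valuation K x))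
  let rep : (S → Bool) → K := fun k => if hk : ∃ y : A, c y.1 = k then hk.choose.1 else 1
  have hrep : ∀ x : A, rep (c x.1) ≠ 0 ∧
      ∀ v : HeightOneSpectrum (𝓞 K), IsSquare (v.valuation K (x.1 * rep (c x.1))) := by
    intro x
    have hk : ∃ y : A, c y.1 = c x.1 := ⟨x, rfl⟩
    simp only [rep, dif_pos hk]
    refine ⟨hk.choose.2.1, fun v => ?_⟩
    rw [map_mul]
    by_cases hv : v ∈ S
    · have := congrFun hk.choose_spec ⟨v, hv⟩
      simp only [c, decide_eq_decide] at this
      exact isSquare_mul_of_iff (by simpa using x.2.1) (by simpa using hk.choose.2.1) this.symm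
    · exact (x.2.2 v hv).mul (hk.choose.2.2 v hv)
  let g : K → (S → Bool) × Fin n := fun x => (c x, f (x * rep (c x)))
  have hcard : Fintype.card ((S → Bool) × Fin n) = 2 ^ S.card * n := by simp
  let e := Fintype.equivFinOfCardEq hcard
  refine ⟨fun x => e (g x), fun x y hx hy vx vy hxy => ?_⟩
  rw [EmbeddingLike.apply_eq_iff_eq] at hxy
  obtain ⟨h1, h2⟩ := Prod.ext_iff.mp hxy
  have h1' : c x = c y := h1
  obtain ⟨nx, sx⟩ := hrep ⟨x, hx, vx⟩
  obtain ⟨ny, sy⟩ := hrep ⟨y, hy, vy⟩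
  obtain ⟨p, hp⟩ := hf _ _ (mul_ne_zero hx nx) (mul_ne_zero hy ny) sx sy h2
  simp only [← h1'] at hp nx
  refine ⟨p / rep (c x), ?_⟩
  rw [div_mul_div_comm, eq_div_iff (by positivity), ← hp]
  ring

end TwistRank

namespace TwistRank
open IsDedekindDomain NumberField WithZero
open scoped nonZeroDivisors

lemma isSquare_valuation {K : Type*} [Field K] (v : Valuation K ℤᵐ⁰) {x y f₁ f₂ f₃ : K}
    (h₁ : v f₁ ≤ 1) (h₂ : v f₂ ≤ 1) (h₃ : v f₃ ≤ 1) (h₁₂ : v (f₁ - f₂) = 1) (h₁₃ : v (f₁ - f₃) = 1)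
    (hxy : y ^ 2 = (x - f₁) * (x - f₂) * (x - f₃)) : IsSquare (v (x - f₁)) := by
  have hv := congrArg v hxy
  simp only [map_pow, map_mul] at hv
  rcases lt_or_ge 1 (v x) with hx | hx
  · have e : ∀ f, v f ≤ 1 → v (x - f) = v x := fun f hf =>
      v.map_sub_eq_of_lt_left (lt_of_le_of_lt hf hx)
    rw [e _ h₁, e _ h₂, e _ h₃] at hv
    rw [e _ h₁]
    have hx0 : v x ≠ 0 := (lt_trans zero_lt_one hx).ne'
    refine ⟨v y / v x, ?_⟩
    rw [div_mul_div_comm, eq_div_iff (mul_ne_zero hx0 hx0), ← sq (v y), hv, mul_assoc]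
  · have hle : v (x - f₁) ≤ 1 := v.map_sub_le hx h₁
    rcases hle.lt_or_eq with hlt | heq
    · have e : ∀ f, v (f₁ - f) = 1 → v (x - f) = 1 := fun f hf => by
        have : x - f = (x - f₁) + (f₁ - f) := by ring
        rw [this, v.map_add_eq_of_lt_right (by rwa [hf]), hf]
      rw [e _ h₁₂, e _ h₁₃, mul_one, mul_one] at hv
      rw [← hv]; exact IsSquare.sq _
    · rw [heq]; exact IsSquare.one

section
variable {K : Type*} [Field K] [NumberField K]

lemma finite_gt_one (x : K) : {v : HeightOneSpectrum (𝓞 K) | 1 < v.valuation K x}.Finite :=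
  HeightOneSpectrum.Support.finite (𝓞 K) x

lemma finite_ne_one {x : K} (hx : x ≠ 0) :
    {v : HeightOneSpectrum (𝓞 K) | v.valuation K x ≠ 1}.Finite := by
  refine ((finite_gt_one x).union (finite_gt_one x⁻¹)).subset ?_
  intro v hv
  rcases lt_or_gt_of_ne hv with h | h
  · right
    change 1 < v.valuation K x⁻¹
    rw [map_inv₀]
    exact (one_lt_inv₀ (zero_lt_iff.mpr (by simpa using hx))).mpr h
  · left; exact h

/-- The bad primes depending only on the curve. -/
lemma exists_bad {e₁ e₂ e₃ : K} (h₁₂ : e₁ ≠ e₂) (h₁₃ : e₁ ≠ e₃) (h₂₃ : e₂ ≠ e₃) :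
    ∃ S₀ : Finset (HeightOneSpectrum (𝓞 K)), ∀ v ∉ S₀, v.valuation K e₁ ≤ 1 ∧
      v.valuation K e₂ ≤ 1 ∧ v.valuation K e₃ ≤ 1 ∧ v.valuation K (e₁ - e₂) = 1 ∧
      v.valuation K (e₁ - e₃) = 1 ∧ v.valuation K (e₂ - e₃) = 1 := by
  have := ((((((finite_gt_one e₁).union (finite_gt_one e₂)).union (finite_gt_one e₃)).union
    (finite_ne_one (sub_ne_zero.mpr h₁₂))).union (finite_ne_one (sub_ne_zero.mpr h₁₃))).union
    (finite_ne_one (sub_ne_zero.mpr h₂₃)))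
  refine ⟨this.toFinset, fun v hv => ?_⟩
  simp only [Set.Finite.mem_toFinset, Set.mem_union, not_or] at hv
  obtain ⟨⟨⟨⟨⟨h1, h2⟩, h3⟩, h4⟩, h5⟩, h6⟩ := hv
  exact ⟨not_lt.mp h1, not_lt.mp h2, not_lt.mp h3, not_not.mp h4, not_not.mp h5, not_not.mp h6⟩

lemma exists_primes_above {p : ℕ} (hp : p.Prime) :
    ∃ T : Finset (HeightOneSpectrum (𝓞 K)), T.card ≤ Module.finrank ℚ K ∧
      ∀ v : HeightOneSpectrum (𝓞 K), (p : 𝓞 K) ∈ v.asIdeal → v ∈ T := by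
  classical
  have hp' : Prime (p : ℤ) := Nat.prime_iff_prime_int.mp hp
  let P : Ideal ℤ := Ideal.span {(p : ℤ)}
  have hP0 : P ≠ ⊥ := by simpa [P] using hp.ne_zero
  have hPp : P.IsPrime := (Ideal.span_singleton_prime hp'.ne_zero).mpr hp'
  have hPm : P.IsMaximal := hPp.isMaximal hP0
  have hinj : Function.Injective (fun v : HeightOneSpectrum (𝓞 K) => v.asIdeal) :=
    fun v w h => HeightOneSpectrum.ext h
  refine ⟨(IsDedekindDomain.primesOverFinset P (𝓞 K)).preimage _ hinj.injOn, ?_, ?_⟩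
  · refine le_trans ?_ (Ideal.card_primesOverFinset_le_finrank (𝓞 K) ℚ K hP0)
    exact Finset.card_le_card_of_injOn _ (fun v hv => by simpa using hv) hinj.injOn
  · intro v hv
    rw [Finset.mem_preimage, IsDedekindDomain.mem_primesOverFinset_iff hP0]
    refine ⟨v.isPrime, ⟨?_⟩⟩
    refine hPm.eq_of_le (Ideal.IsPrime.under ℤ v.asIdeal).ne_top ?_
    rw [Ideal.span_singleton_le_iff_mem, Ideal.mem_comap]
    simpa using hv

lemma exists_primes_dividing {D : ℤ} (hD : D ≠ 0) :
    ∃ T : Finset (HeightOneSpectrum (𝓞 K)),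
      T.card ≤ Module.finrank ℚ K * D.natAbs.primeFactors.card ∧
      ∀ v ∉ T, v.valuation K (D : K) = 1 := by
  classical
  choose! T hT hT' using fun (p : ℕ) (hp : p.Prime) => exists_primes_above (K := K) hp
  refine ⟨D.natAbs.primeFactors.biUnion T, ?_, fun v hv => ?_⟩
  · rw [mul_comm]
    exact Finset.card_biUnion_le_card_mul _ _ _ fun p hp => hT p (Nat.prime_of_mem_primeFactors hp)
  · have hDK : (D : K) = algebraMap (𝓞 K) K (D : 𝓞 K) := by simp
    by_contra hne
    have hlt : v.valuation K (D : K) < 1 := by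
      refine lt_of_le_of_ne ?_ hne
      rw [hDK]; exact v.valuation_le_one _
    rw [hDK] at hlt
    have hmem : (D : 𝓞 K) ∈ v.asIdeal := (v.valuation_lt_one_iff_mem _).mp hlt
    have hmem' : ((D.natAbs : ℕ) : 𝓞 K) ∈ v.asIdeal := by
      rcases Int.natAbs_eq D with h | h
      · rw [h] at hmem; simpa using hmem
      · rw [h] at hmem; simpa using hmem
    have hn : D.natAbs ≠ 0 := by simpa using hD
    rw [← Nat.factorization_prod_pow_eq_self hn, Finsupp.prod, Nat.cast_prod] at hmem'
    have := v.isPrime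
    obtain ⟨p, hp, hpv⟩ := this.prod_mem_iff.mp hmem'
    rw [Nat.cast_pow] at hpv
    have hp' : p ∈ D.natAbs.primeFactors := by simpa using hp
    apply hv
    rw [Finset.mem_biUnion]
    exact ⟨p, hp', hT' p (Nat.prime_of_mem_primeFactors hp') v (this.mem_of_pow_mem _ hpv)⟩
end
end TwistRank

namespace TwistRank
open scoped nonZeroDivisors

lemma index_le_of_map {G T : Type*} [AddCommGroup G] [Finite T] (H : AddSubgroup G) (f : G → T)
    (hf : ∀ x y, f x = f y → x - y ∈ H) : H.FiniteIndex ∧ H.index ≤ Nat.card T := by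
  have hinj : Function.Injective (fun q : G ⧸ H => f q.out) := by
    intro p q h
    have := hf _ _ h.symm
    rw [← QuotientAddGroup.out_eq' p, ← QuotientAddGroup.out_eq' q, QuotientAddGroup.eq]
    convert this using 1
    abel
  have hfin : Finite (G ⧸ H) := Finite.of_injective _ hinj
  exact ⟨AddSubgroup.finiteIndex_of_finite_quotient, Nat.card_le_card_of_injective _ hinj⟩

lemma grpRank_eq (G : Type*) [AddCommGroup G] : grpRank G = Module.finrank ℤ G := by
  rw [grpRank, IsFractionRing.finrank_right_eq ℤ ℚ]
  have h := IsLocalizedModule.finrank_eq ℤ⁰ (TensorProduct.mk ℤ ℚ G 1) le_rfl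
  rw [← h]
  congr 1

lemma grpRank_le_of_injective {H G : Type*} [AddCommGroup H] [AddCommGroup G] (f : H →+ G)
    (hf : Function.Injective f) (hG : AddGroup.FG G) : grpRank H ≤ grpRank G := by
  have : Module.Finite ℤ G := Module.Finite.iff_addGroup_fg.mpr hG
  rw [grpRank_eq, grpRank_eq]
  exact LinearMap.finrank_le_finrank_of_injective (f := f.toIntLinearMap) hf

lemma grpRank_le_of_index {G : Type*} [AddCommGroup G] (hG : AddGroup.FG G) {N : ℕ}
    (hfin : (nsmulAddMonoidHom (α := G) 2).range.FiniteIndex)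
    (hN : (nsmulAddMonoidHom (α := G) 2).range.index ≤ 2 ^ N) : grpRank G ≤ N := by
  have : Module.Finite ℤ G := Module.Finite.iff_addGroup_fg.mpr hG
  let L := G ⧸ Submodule.torsion ℤ G
  have hL : Module.finrank ℤ L = Module.finrank ℤ G := finrank_quotient_eq_of_le_torsion le_rfl
  have : Module.Free ℤ L := Module.free_of_finite_type_torsion_free'
  let B := Module.finBasis ℤ L
  let r := Module.finrank ℤ L
  let φ : G →+ (Fin r → ZMod 2) :=
    ((Int.castAddHom (ZMod 2)).compLeft (Fin r)).comp
      ((B.equivFun.toLinearMap.comp (Submodule.torsion ℤ G).mkQ).toAddMonoidHom)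
  have hφ : Function.Surjective φ := by
    intro w
    obtain ⟨g, hg⟩ := (Submodule.torsion ℤ G).mkQ_surjective
      (B.equivFun.symm fun i => ((w i).val : ℤ))
    refine ⟨g, ?_⟩
    funext i
    have : φ g i = ((B.equivFun ((Submodule.torsion ℤ G).mkQ g) i : ℤ) : ZMod 2) := rfl
    rw [this, hg, LinearEquiv.apply_symm_apply]
    simp
  have hle : (nsmulAddMonoidHom (α := G) 2).range ≤ φ.ker := by
    rintro _ ⟨g, rfl⟩
    rw [AddMonoidHom.mem_ker, nsmulAddMonoidHom_apply, map_nsmul]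
    funext i
    simp only [Pi.smul_apply, Pi.zero_apply, nsmul_eq_mul]
    have : ((2 : ℕ) : ZMod 2) = 0 := by decide
    rw [this, zero_mul]
  have hidx : φ.ker.index = 2 ^ r := by
    rw [AddSubgroup.index_ker, AddMonoidHom.range_eq_top.mpr hφ]
    simp
  have hdvd := AddSubgroup.index_dvd_of_le hle
  rw [hidx] at hdvd
  have := (Nat.le_of_dvd (Nat.pos_of_ne_zero hfin.index_ne_zero) hdvd).trans hN
  rw [grpRank_eq, ← hL]
  exact (Nat.pow_le_pow_iff_right (by norm_num)).mp this
end TwistRank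

namespace TwistRank
open WeierstrassCurve WeierstrassCurve.Affine IsDedekindDomain NumberField

lemma tors_inj {K A : Type*} [DecidableEq K] {f₁ f₂ f₃ x x' : K}
    (hx : (x = f₁ ∨ x = f₂) ∨ x = f₃) (hx' : (x' = f₁ ∨ x' = f₂) ∨ x' = f₃)
    (h : (if x = f₁ then (Sum.inr 1 : A ⊕ Fin 4) else if x = f₂ then Sum.inr 2 else Sum.inr 3) =
      (if x' = f₁ then (Sum.inr 1 : A ⊕ Fin 4) else if x' = f₂ then Sum.inr 2 else Sum.inr 3)) :
    x = x' := by
  split_ifs at h <;> simp only [Sum.inr.injEq, Fin.reduceEq] at h <;> grind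

lemma curve_bound {K : Type*} [Field K] [NumberField K] [DecidableEq K] {e₁ e₂ e₃ : K}
    (h₁₂ : e₁ ≠ e₂) (h₁₃ : e₁ ≠ e₃) (h₂₃ : e₂ ≠ e₃) :
    ∃ c : ℕ, ∀ (D : ℤ), D ≠ 0 → ∀ W : WeierstrassCurve K,
      IsSplit W (D * e₁) (D * e₂) (D * e₃) →
      AddGroup.FG W.toAffine.Point ∧
      grpRank W.toAffine.Point ≤
        2 * (Module.finrank ℚ K * D.natAbs.primeFactors.card) + c := by
  classical
  obtain ⟨S₀, hS₀⟩ := exists_bad h₁₂ h₁₃ h₂₃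
  obtain ⟨n, hn⟩ := exists_even_map' K
  refine ⟨2 * S₀.card + (n ^ 2 + 4), fun D hD W hW => ?_⟩
  obtain ⟨T, hTc, hT⟩ := exists_primes_dividing (K := K) hD
  have hH := hn (S₀ ∪ T)
  generalize hm : 2 ^ (S₀ ∪ T).card * n = m at hH
  obtain ⟨f, hf⟩ := hH
  have hell : W.IsElliptic := hW.isElliptic two_ne_zero
  -- points with nonzero `y` give elements that are even outside the bad set
  have heven : ∀ x y : K, W.toAffine.Equation x y → ∀ v ∉ S₀ ∪ T,
      IsSquare (v.valuation K (x - D * e₁)) ∧ IsSquare (v.valuation K (x - D * e₂)) := by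
    intro x y hxy v hv
    rw [Finset.mem_union, not_or] at hv
    obtain ⟨b1, b2, b3, b12, b13, b23⟩ := hS₀ v hv.1
    have bD := hT v hv.2
    have eq := hW.equation.mp hxy
    have b21 : v.valuation K (e₂ - e₁) = 1 := by rw [Valuation.map_sub_swap]; exact b12
    constructor
    · refine isSquare_valuation (v.valuation K) (y := y) (f₁ := D * e₁) (f₂ := D * e₂)
        (f₃ := D * e₃) ?_ ?_ ?_ ?_ ?_ eq
      all_goals first
        | rw [map_mul, bD, one_mul]; assumption
        | rw [← mul_sub, map_mul, bD, one_mul]; assumption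
    · refine isSquare_valuation (v.valuation K) (y := y) (f₁ := D * e₂) (f₂ := D * e₁)
        (f₃ := D * e₃) ?_ ?_ ?_ ?_ ?_ (by rw [eq]; ring)
      all_goals first
        | rw [map_mul, bD, one_mul]; assumption
        | rw [← mul_sub, map_mul, bD, one_mul]; assumption
  -- the descent map
  let g : W.toAffine.Point → (Fin m × Fin m) ⊕ Fin 4 := fun P => match P with
    | .zero => .inr 0
    | .some x y _ =>
      if y = 0 then
        (if x = D * e₁ then .inr 1 else if x = D * e₂ then .inr 2 else .inr 3)
      else .inl (f (x - D * e₁), f (x - D * e₂))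
  have hg : ∀ P Q, g P = g Q → P - Q ∈ (nsmulAddMonoidHom (α := W.toAffine.Point) 2).range := by
    have same : ∀ P Q : W.toAffine.Point, P = Q →
        P - Q ∈ (nsmulAddMonoidHom (α := W.toAffine.Point) 2).range := by
      rintro P Q rfl
      rw [sub_self]; exact zero_mem _
    rintro (_ | ⟨x, y, hP⟩) (_ | ⟨x', y', hQ⟩) hPQ
    · exact same _ _ rfl
    · exfalso
      simp only [g] at hPQ
      split_ifs at hPQ <;> simp at hPQ
    · exfalso
      simp only [g] at hPQ
      split_ifs at hPQ <;> simp at hPQ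
    · have eP := hW.equation.mp hP.1
      have eQ := hW.equation.mp hQ.1
      by_cases hy : y = 0
      · by_cases hy' : y' = 0
        · apply same
          have hx : x = x' := by
            subst hy hy'
            simp only [ne_eq, OfNat.ofNat_ne_zero, not_false_eq_true, zero_pow, zero_eq_mul,
              mul_eq_zero, sub_eq_zero] at eP eQ
            simp only [g, if_true] at hPQ
            exact tors_inj eP eQ hPQ
          subst hx hy hy'
          rfl
        · exfalso
          simp only [g, hy, hy', if_true, if_false] at hPQ
          split_ifs at hPQ
      · by_cases hy' : y' = 0
        · exfalso
          simp only [g, hy, hy', if_true, if_false] at hPQ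
          split_ifs at hPQ
        · simp only [g, hy, hy', if_false, Sum.inl.injEq, Prod.mk.injEq] at hPQ
          have p0 : (x - D * e₁) * (x - D * e₂) * (x - D * e₃) ≠ 0 := by rw [← eP]; positivity
          have q0 : (x' - D * e₁) * (x' - D * e₂) * (x' - D * e₃) ≠ 0 := by rw [← eQ]; positivity
          refine hW.fiber two_ne_zero hP hQ hy hy' ?_ ?_
          · exact hf _ _ (left_ne_zero_of_mul (left_ne_zero_of_mul p0))
              (left_ne_zero_of_mul (left_ne_zero_of_mul q0))
              (fun v hv => (heven x y hP.1 v hv).1) (fun v hv => (heven x' y' hQ.1 v hv).1) hPQ.1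
          · exact hf _ _ (right_ne_zero_of_mul (left_ne_zero_of_mul p0))
              (right_ne_zero_of_mul (left_ne_zero_of_mul q0))
              (fun v hv => (heven x y hP.1 v hv).2) (fun v hv => (heven x' y' hQ.1 v hv).2) hPQ.2
  obtain ⟨hfin, hidx⟩ := index_le_of_map _ g hg
  have hFG : AddGroup.FG W.toAffine.Point := fg_of_index W hW.a₁ hW.a₂ hW.a₃ hfin
  refine ⟨hFG, ?_⟩
  have hcard : Nat.card ((Fin m × Fin m) ⊕ Fin 4) = m * m + 4 := by simp
  rw [hcard] at hidx
  have hb : m * m + 4 ≤ 2 ^ (2 * (S₀ ∪ T).card + (n ^ 2 + 4)) := by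
    rw [pow_add, pow_mul']
    have h1 : n ^ 2 + 4 ≤ 2 ^ (n ^ 2 + 4) := Nat.lt_two_pow_self.le
    have h2 : 1 ≤ (2 ^ (S₀ ∪ T).card) ^ 2 := Nat.one_le_pow _ _ (by positivity)
    calc m * m + 4 ≤ (2 ^ (S₀ ∪ T).card) ^ 2 * (n ^ 2 + 4) := by rw [← hm]; nlinarith
      _ ≤ _ := Nat.mul_le_mul_left _ h1
  have hr := grpRank_le_of_index hFG hfin (hidx.trans hb)
  have hu := Finset.card_union_le S₀ T
  omega

lemma finrank_splittingField_le {F : Type*} [Field F] [CharZero F] (p : Polynomial F)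
    (hp : p.natDegree ≤ 3) : Module.finrank F p.SplittingField ≤ 6 := by
  classical
  have : IsGalois F p.SplittingField := IsGalois.mk
  rw [← IsGalois.card_aut_eq_finrank]
  have hs : Fact ((p.map (algebraMap F p.SplittingField)).Splits) :=
    ⟨Polynomial.SplittingField.splits p⟩
  have hinj := Polynomial.Gal.galActionHom_injective p p.SplittingField
  have h1 := Nat.card_le_card_of_injective _ hinj
  rw [Nat.card_perm] at h1
  have h2 : Nat.card (p.rootSet p.SplittingField) ≤ 3 := by
    rw [Nat.card_coe_set_eq]
    exact (Polynomial.ncard_rootSet_le p p.SplittingField).trans hp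
  exact h1.trans (Nat.factorial_le h2)

lemma grpRank_congr {F : Type*} [Field F] [DecidableEq F] {V W : WeierstrassCurve F} (h : V = W) :
    grpRank V.toAffine.Point = grpRank W.toAffine.Point := by
  subst h; rfl

lemma exists_roots (a b : ℚ) (hab : 4 * a ^ 3 + 27 * b ^ 2 ≠ 0) :
    ∃ (K : Type) (_ : Field K) (_ : NumberField K) (e₁ e₂ e₃ : K), Module.finrank ℚ K ≤ 6 ∧
      e₁ ≠ e₂ ∧ e₁ ≠ e₃ ∧ e₂ ≠ e₃ ∧ e₁ + e₂ + e₃ = 0 ∧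
      algebraMap ℚ K a = e₁ * e₂ + e₁ * e₃ + e₂ * e₃ ∧ algebraMap ℚ K b = - (e₁ * e₂ * e₃) := by
  let P : Cubic ℚ := ⟨1, 0, a, b⟩
  have ha : P.a ≠ 0 := one_ne_zero
  obtain ⟨e₁, e₂, e₃, h3⟩ := (Cubic.splits_iff_roots_eq_three ha).mp
    (Polynomial.SplittingField.splits P.toPoly)
  have hd : P.discr ≠ 0 := by
    intro h
    apply hab
    simp only [Cubic.discr, P] at h
    linear_combination -h
  obtain ⟨h12, h13, h23⟩ := (Cubic.discr_ne_zero_iff_roots_ne ha h3).mp hd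
  have hb := Cubic.b_eq_three_roots ha h3
  have hc := Cubic.c_eq_three_roots ha h3
  have hd' := Cubic.d_eq_three_roots ha h3
  simp only [P, map_zero, map_one, one_mul] at hb hc hd'
  refine ⟨P.toPoly.SplittingField, inferInstance, { }, e₁, e₂, e₃,
    finrank_splittingField_le _ (Cubic.natDegree_of_a_ne_zero ha).le, h12, h13, h23, ?_, hc, hd'⟩
  linear_combination hb

end TwistRank

/-- For an elliptic curve `E : y² = x³ + ax + b` over `ℚ` there is a constant `c(E)` such
that every quadratic twist satisfies `rank E^(D)(ℚ) ≤ 12·ω(D) + c(E)`. -/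
theorem rank_quadTwist_le (a b : ℚ) (hab : 4 * a ^ 3 + 27 * b ^ 2 ≠ 0) :
    ∃ c : ℝ, ∀ D : ℤ, D ≠ 0 → Squarefree D →
      (grpRank (quadTwist a b D).toAffine.Point : ℝ) ≤
        12 * (D.natAbs.primeFactors.card : ℝ) + c := by
  classical
  obtain ⟨K, _, _, e₁, e₂, e₃, hK, h12, h13, h23, hsum, hA, hB⟩ := TwistRank.exists_roots a b hab
  obtain ⟨c, hc⟩ := TwistRank.curve_bound h12 h13 h23
  refine ⟨c, fun D hD _ => ?_⟩
  have hDK : (D : K) ≠ 0 := by exact_mod_cast hD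
  have hsplit : TwistRank.IsSplit ((quadTwist a b D).baseChange K) (D * e₁) (D * e₂) (D * e₃) := by
    refine ⟨?_, ?_, ?_, ?_, ?_, ?_, ?_, ?_, ?_⟩
    · simp [quadTwist, WeierstrassCurve.baseChange, WeierstrassCurve.map]
    · simp [quadTwist, WeierstrassCurve.baseChange, WeierstrassCurve.map]
    · simp [quadTwist, WeierstrassCurve.baseChange, WeierstrassCurve.map]
    · simp only [quadTwist, WeierstrassCurve.baseChange, WeierstrassCurve.map, map_mul, map_pow, hA,
        map_intCast]
      ring
    · simp only [quadTwist, WeierstrassCurve.baseChange, WeierstrassCurve.map, map_mul, map_pow, hB,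
        map_intCast]
      ring
    · linear_combination (D : K) * hsum
    · exact fun h => h12 (mul_left_cancel₀ hDK h)
    · exact fun h => h13 (mul_left_cancel₀ hDK h)
    · exact fun h => h23 (mul_left_cancel₀ hDK h)
  obtain ⟨hFG, hr⟩ := hc D hD _ hsplit
  have hinj := TwistRank.grpRank_le_of_injective
    (WeierstrassCurve.Affine.Point.map (W' := quadTwist a b D) (Algebra.ofId ℚ K))
    (WeierstrassCurve.Affine.Point.map_injective (W' := quadTwist a b D) (Algebra.ofId ℚ K)) hFG
  have hid : (quadTwist a b D).baseChange ℚ = quadTwist a b D := WeierstrassCurve.map_id _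
  have hcongr := TwistRank.grpRank_congr hid
  have h1 : grpRank (quadTwist a b D).toAffine.Point ≤
      2 * (Module.finrank ℚ K * D.natAbs.primeFactors.card) + c := by
    refine le_trans (le_of_eq ?_) (hinj.trans hr)
    convert hcongr.symm
  have h2 : Module.finrank ℚ K * D.natAbs.primeFactors.card ≤ 6 * D.natAbs.primeFactors.card :=
    Nat.mul_le_mul_right _ hK
  have h3 : grpRank (quadTwist a b D).toAffine.Point ≤ 12 * D.natAbs.primeFactors.card + c := by
    omega
  exact_mod_cast h3
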